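/- Every orthonormalizable A-module is flat over A. That is, if A is a commutative Noetherian complete local ring with maximal ideal m, and V is an A-module which is m-adically complete and separated and such that V/m^iV is a free A/m^i-module for every i ≥ 1, then V is a flat A-module. -/

import Mathlib

/-!
Choose a presentation `A^r → A^l → J` of an ideal `J ≤ A`. Flatness of `V` amounts to exactness of
`A^r ⊗ V → A^l ⊗ V → A ⊗ V`. By the Artin–Rees lemma both maps `A^r → A^l` and `A^l → A` are
strict for the adic topologies up to a shift, and flatness of all `V / I^n V` over `A / I^n` carries
this over to the maps tensored with `V`. For the second map this gives that the kernel lies in the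
closure of the image of the first one; for the first map it gives, by successive approximation in
the complete module `A^r ⊗ V`, that this image is closed.
-/

open Function LinearMap TensorProduct

section Complete

variable {A : Type*} [CommRing A] (I : Ideal A)

theorem isAdicComplete_of_linearEquiv {M N : Type*} [AddCommGroup M] [Module A M] [AddCommGroup N]
    [Module A N] [IsAdicComplete I M] (e : M ≃ₗ[A] N) : IsAdicComplete I N := by
  rw [← AdicCompletion.of_bijective_iff]
  have of_eq : ⇑(AdicCompletion.of I N) =
      AdicCompletion.congr I e ∘ AdicCompletion.of I M ∘ e.symm := by
    ext x : 1
    simp [AdicCompletion.map_of]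
  rw [of_eq]
  exact (AdicCompletion.congr I e).bijective.comp
    ((AdicCompletion.of_bijective I M).comp e.symm.bijective)

theorem isAdicComplete_pi {ι : Type*} [Finite ι] (M : ι → Type*) [∀ i, AddCommGroup (M i)]
    [∀ i, Module A (M i)] [∀ i, IsAdicComplete I (M i)] : IsAdicComplete I (∀ i, M i) := by
  classical
  have := Fintype.ofFinite ι
  rw [← AdicCompletion.of_bijective_iff,
    ← (AdicCompletion.piEquivOfFintype I M).bijective.of_comp_iff']
  have comp_of_eq : AdicCompletion.piEquivOfFintype I M ∘ AdicCompletion.of I (∀ i, M i) =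
      Pi.map fun i ↦ AdicCompletion.of I (M i) := by
    ext x i : 2
    simp [AdicCompletion.pi, AdicCompletion.map_of]
  rw [comp_of_eq]
  exact Function.Bijective.piMap fun i ↦ AdicCompletion.of_bijective I (M i)

theorem isAdicComplete_pi_tensorProduct (ι : Type*) [Finite ι] (V : Type*) [AddCommGroup V]
    [Module A V] [IsAdicComplete I V] : IsAdicComplete I ((ι → A) ⊗[A] V) := by
  classical
  have := Fintype.ofFinite ι
  have := isAdicComplete_pi I fun _ : ι ↦ V
  exact isAdicComplete_of_linearEquiv I
    ((piScalarRight A A V ι).symm ≪≫ₗ TensorProduct.comm A V (ι → A))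

end Complete

section Strict

variable {A : Type*} [CommRing A] {M N : Type*} [AddCommGroup M] [Module A M] [AddCommGroup N]
  [Module A N]

/-- A linear map `f : M → N` is `I`-adically strict if `f⁻¹(I ^ (n + k) N) ⊆ ker f + I ^ n M` for
all `n` and a fixed shift `k`. The quotient topology from `M` and the subspace topology from `N`
then agree on the range of `f`, with a linear comparison of the two filtrations. -/
def IsAdicStrict (I : Ideal A) (f : M →ₗ[A] N) : Prop :=
  ∃ k, ∀ n, (I ^ (n + k) • (⊤ : Submodule A N)).comap f ≤ ker f ⊔ I ^ n • ⊤

theorem isAdicStrict_of_isNoetherianRing [IsNoetherianRing A] [Module.Finite A N] (I : Ideal A)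
    (f : M →ₗ[A] N) : IsAdicStrict I f := by
  obtain ⟨k, artinRees⟩ := I.exists_pow_inf_eq_pow_smul (range f)
  refine ⟨k, fun n x hx ↦ ?_⟩
  have hfx : f x ∈ I ^ n • range f := by
    have : f x ∈ I ^ (n + k) • ⊤ ⊓ range f := ⟨hx, x, rfl⟩
    rw [artinRees (n + k) (Nat.le_add_left k n), Nat.add_sub_cancel] at this
    exact Submodule.smul_mono le_rfl inf_le_right this
  rw [range_eq_map, ← Submodule.map_smul''] at hfx
  rwa [sup_comm, ← Submodule.comap_map_eq]

variable {I : Ideal A}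

theorem exists_sub_mem_and_sModEq {f : M →ₗ[A] N} {P P' : Submodule A N} {Q : Submodule A M}
    (hP : P' ≤ P) (hf : P.comap f ≤ ker f ⊔ Q) {x : N} {y v : M} (hy : x - f y ∈ P)
    (hv : x - f v ∈ P') : ∃ y', x - f y' ∈ P' ∧ y ≡ y' [SMOD Q] := by
  -- Correct the better approximation `v` by some `z ∈ ker f` so that it stays close to `y`.
  have hyv : y - v ∈ P.comap f := by simpa using sub_mem (hP hv) hy
  obtain ⟨z, hz, w, hw, hzw⟩ := Submodule.mem_sup.1 (hf hyv)
  refine ⟨v + z, by rwa [map_add, mem_ker.1 hz, add_zero], SModEq.sub_mem.2 ?_⟩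
  rwa [← sub_sub, ← hzw, add_sub_cancel_left]

theorem IsAdicStrict.iInf_range_sup_le_range [IsPrecomplete I M] [IsHausdorff I N] {f : M →ₗ[A] N}
    (hf : IsAdicStrict I f) : ⨅ n : ℕ, (range f ⊔ I ^ n • ⊤) ≤ range f := by
  obtain ⟨k, hk⟩ := hf
  intro x hx
  have exists_approx (n : ℕ) : ∃ y, x - f y ∈ I ^ n • (⊤ : Submodule A N) := by
    obtain ⟨_, ⟨y, rfl⟩, w, hw, rfl⟩ := Submodule.mem_sup.1 ((Submodule.mem_iInf _).1 hx n)
    exact ⟨y, by rwa [add_sub_cancel_left]⟩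
  have exists_next (n : ℕ) (y : M) (hy : x - f y ∈ I ^ (n + k) • (⊤ : Submodule A N)) :
      ∃ y', x - f y' ∈ I ^ (n + 1 + k) • (⊤ : Submodule A N) ∧
        y ≡ y' [SMOD (I ^ n • ⊤ : Submodule A M)] := by
    obtain ⟨v, hv⟩ := exists_approx (n + 1 + k)
    exact exists_sub_mem_and_sModEq (Submodule.pow_smul_top_le I N (by lia)) (hk n) hy hv
  choose! next hnext using exists_next
  obtain ⟨y₀, hy₀⟩ := exists_approx (0 + k)
  let y : ℕ → M := fun n ↦ Nat.rec y₀ next n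
  have hy (n : ℕ) : x - f (y n) ∈ I ^ (n + k) • (⊤ : Submodule A N) := by
    induction n with
    | zero => exact hy₀
    | succ n ih => exact (hnext n (y n) ih).1
  have cauchy : AdicCompletion.IsAdicCauchy I M y :=
    (AdicCompletion.isAdicCauchy_iff I M y).2 fun n ↦ (hnext n (y n) (hy n)).2
  obtain ⟨L, hL⟩ := IsPrecomplete.prec ‹_› cauchy
  refine ⟨L, (IsHausdorff.eq_iff_smodEq (I := I)).2 fun n ↦ ?_⟩
  have map_eq_limit : f (y n) ≡ f L [SMOD (I ^ n • ⊤ : Submodule A N)] := by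
    rw [SModEq.sub_mem, ← map_sub]
    exact Submodule.smul_top_le_comap_smul_top _ f (SModEq.sub_mem.1 (hL n))
  have eq_map : x ≡ f (y n) [SMOD (I ^ n • ⊤ : Submodule A N)] :=
    SModEq.sub_mem.2 (Submodule.pow_smul_top_le I N (Nat.le_add_right n k) (hy n))
  exact (eq_map.trans map_eq_limit).symm

end Strict

section Tensor

variable {A : Type*} [CommRing A] {M N : Type*} [AddCommGroup M] [Module A M] [AddCommGroup N]
  [Module A N] {V : Type*} [AddCommGroup V] [Module A V]

theorem rTensor_injective_of_flat_quotient {I : Ideal A}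
    (hV : Module.Flat (A ⧸ I) (V ⧸ (I • ⊤ : Submodule A V))) (hM : Module.IsTorsionBySet A M I)
    (hN : Module.IsTorsionBySet A N I) {f : M →ₗ[A] N} (hf : Injective f) :
    Injective (f.rTensor V) := by
  let := hM.module
  let := hN.module
  have hA : Surjective (algebraMap A (A ⧸ I)) := Ideal.Quotient.mk_surjective
  have : Module.Flat (A ⧸ I) ((A ⧸ I) ⊗[A] V) :=
    .of_linearEquiv ((quotTensorEquivQuotSMul V I).extendScalarsOfSurjective hA)
  let f' : M →ₗ[A ⧸ I] N := f.extendScalarsOfSurjective hA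
  let cancelM := AlgebraTensorModule.cancelBaseChange A (A ⧸ I) (A ⧸ I) M V
  let cancelN := AlgebraTensorModule.cancelBaseChange A (A ⧸ I) (A ⧸ I) N V
  have square : f.rTensor V ∘ cancelM = cancelN ∘ f'.rTensor ((A ⧸ I) ⊗[A] V) := by
    have : AlgebraTensorModule.map f' LinearMap.id ∘ₗ cancelM.toLinearMap =
        cancelN.toLinearMap ∘ₗ f'.rTensor ((A ⧸ I) ⊗[A] V) := by
      ext m v
      simp [cancelM, cancelN]
    exact congr_arg DFunLike.coe this
  rw [← Injective.of_comp_iff' _ cancelM.bijective, square]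
  exact cancelN.injective.comp (Module.Flat.rTensor_preserves_injective_linearMap f' hf)

theorem range_rTensor_subtype_le_sup {I : Ideal A} {P Q : Submodule A M} (h : P ≤ Q ⊔ I • ⊤) :
    range (P.subtype.rTensor V) ≤ range (Q.subtype.rTensor V) ⊔ I • ⊤ := by
  rintro _ ⟨t, rfl⟩
  induction t with
  | zero => simp
  | add s t hs ht => simpa using add_mem hs ht
  | tmul p v =>
    obtain ⟨q, hq, w, hw, hp⟩ := Submodule.mem_sup.1 (h p.2)
    rw [rTensor_tmul, Submodule.subtype_apply, ← hp, add_tmul]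
    exact Submodule.add_mem_sup ⟨⟨q, hq⟩ ⊗ₜ v, rfl⟩
      (Submodule.smul_top_le_comap_smul_top I ((TensorProduct.mk A M V).flip v) hw)

theorem smul_top_le_ker_rTensor_mkQ (I : Ideal A) :
    I • ⊤ ≤ ker ((I • ⊤ : Submodule A N).mkQ.rTensor V) := by
  refine Submodule.smul_le.2 fun a ha x _ ↦ ?_
  have smul_mkQ : a • (I • ⊤ : Submodule A N).mkQ = 0 :=
    LinearMap.ext fun _ ↦ (Submodule.Quotient.mk_eq_zero _).2 (Submodule.smul_mem_smul ha trivial)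
  rw [mem_ker, map_smul, ← LinearMap.smul_apply, ← rTensor_smul, smul_mkQ, rTensor_zero,
    LinearMap.zero_apply]

theorem comap_rTensor_le_of_flat_quotient {I J : Ideal A} {f : M →ₗ[A] N}
    (hV : Module.Flat (A ⧸ I) (V ⧸ (I • ⊤ : Submodule A V)))
    (hf : (I • (⊤ : Submodule A N)).comap f ≤ ker f ⊔ J • ⊤) :
    (I • (⊤ : Submodule A (N ⊗[A] V))).comap (f.rTensor V) ≤
      range ((ker f).subtype.rTensor V) ⊔ J • ⊤ := by
  let P := (I • (⊤ : Submodule A N)).comap f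
  let fbar : M ⧸ P →ₗ[A] N ⧸ (I • ⊤ : Submodule A N) := P.mapQ _ f le_rfl
  have torsion_target := Module.isTorsionBySet_quotient_ideal_smul N I
  have fbar_injective : Injective fbar := by
    rw [← ker_eq_bot, Submodule.ker_mapQ, Submodule.mkQ_map_self]
  have torsion_source : Module.IsTorsionBySet A (M ⧸ P) I := fun x a ↦
    fbar_injective (by rw [map_smul, torsion_target, map_zero])
  have fbar_rTensor_injective :=
    rTensor_injective_of_flat_quotient hV torsion_source torsion_target fbar_injective
  refine le_trans (fun x hx ↦ ?_) (range_rTensor_subtype_le_sup hf)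
  rw [← rTensor_mkQ, mem_ker]
  refine fbar_rTensor_injective ?_
  rw [map_zero, ← rTensor_comp_apply, P.mapQ_mkQ, rTensor_comp_apply]
  exact smul_top_le_ker_rTensor_mkQ I hx

theorem IsAdicStrict.rTensor {I : Ideal A} {f : M →ₗ[A] N} (hf : IsAdicStrict I f)
    (hV : ∀ i, Module.Flat (A ⧸ I ^ i) (V ⧸ (I ^ i • ⊤ : Submodule A V))) :
    IsAdicStrict I (f.rTensor V) := by
  obtain ⟨k, hk⟩ := hf
  have range_le_ker : range ((ker f).subtype.rTensor V) ≤ ker (f.rTensor V) := by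
    rw [range_le_ker_iff, ← rTensor_comp, comp_ker_subtype, rTensor_zero]
  exact ⟨k, fun n ↦ (comap_rTensor_le_of_flat_quotient (hV (n + k)) (hk n)).trans
    (sup_le_sup_right range_le_ker _)⟩

theorem exact_rTensor_of_isAdicStrict {I : Ideal A} {L : Type*} [AddCommGroup L] [Module A L]
    {g : L →ₗ[A] M} {f : M →ₗ[A] N} (hgf : Exact g f) (hg : IsAdicStrict I g)
    (hf : IsAdicStrict I f)
    (hV : ∀ i, Module.Flat (A ⧸ I ^ i) (V ⧸ (I ^ i • ⊤ : Submodule A V)))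
    [IsPrecomplete I (L ⊗[A] V)] [IsHausdorff I (M ⊗[A] V)] :
    Exact (g.rTensor V) (f.rTensor V) := by
  have range_le_ker : range (g.rTensor V) ≤ ker (f.rTensor V) := by
    rw [range_le_ker_iff, ← rTensor_comp, hgf.linearMap_comp_eq_zero, rTensor_zero]
  obtain ⟨k, hk⟩ := hf
  refine exact_iff.2 (le_antisymm (fun x hx ↦ ?_) range_le_ker)
  refine (hg.rTensor hV).iInf_range_sup_le_range ((Submodule.mem_iInf _).2 fun n ↦ ?_)
  rw [rTensor_range, ← exact_iff.1 hgf]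
  refine comap_rTensor_le_of_flat_quotient (hV (n + k)) (hk n) ?_
  rw [Submodule.mem_comap, mem_ker.1 hx]
  exact zero_mem _

end Tensor

theorem flat_of_orthonormalizable_general {A : Type*} [CommRing A] [IsNoetherianRing A]
    (I : Ideal A) (V : Type*) [AddCommGroup V] [Module A V] [IsAdicComplete I V]
    (hV : ∀ i, 1 ≤ i → Module.Flat (A ⧸ I ^ i) (V ⧸ (I ^ i • ⊤ : Submodule A V))) :
    Module.Flat A V := by
  have flat_quotient (i : ℕ) : Module.Flat (A ⧸ I ^ i) (V ⧸ (I ^ i • ⊤ : Submodule A V)) := by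
    obtain rfl | hi := i.eq_zero_or_pos
    · have : Subsingleton (V ⧸ (I ^ 0 • ⊤ : Submodule A V)) :=
        Submodule.Quotient.subsingleton_iff.2 (by simp)
      infer_instance
    · exact hV i hi
  refine Module.Flat.iff_rTensor_injective'.2 fun J ↦ (injective_iff_map_eq_zero _).2 fun z hz ↦ ?_
  obtain ⟨l, p, hp⟩ := Module.Finite.exists_fin' A J
  obtain ⟨r, q, hq⟩ := Module.Finite.exists_fin' A (ker p)
  let g := (ker p).subtype ∘ₗ q
  have range_g : range g = ker p := by
    rw [range_comp_of_range_eq_top _ (range_eq_top.2 hq), Submodule.range_subtype]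
  have := isAdicComplete_pi_tensorProduct I (Fin r) V
  have := isAdicComplete_pi_tensorProduct I (Fin l) V
  have exact_rTensor : Exact (g.rTensor V) ((J.subtype ∘ₗ p).rTensor V) :=
    exact_rTensor_of_isAdicStrict
      (exact_iff.2 (by rw [range_g, ker_comp_of_ker_eq_bot _ J.ker_subtype]))
      (isAdicStrict_of_isNoetherianRing I g) (isAdicStrict_of_isNoetherianRing I _) flat_quotient
  obtain ⟨x, rfl⟩ := rTensor_surjective V hp z
  rw [← rTensor_comp_apply] at hz
  obtain ⟨y, rfl⟩ := (exact_rTensor x).1 hz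
  rw [← rTensor_comp_apply, range_le_ker_iff.1 range_g.le, rTensor_zero, LinearMap.zero_apply]

/-- **Every orthonormalizable module over a complete Noetherian local ring is flat.**

Let `A` be a commutative Noetherian complete local ring with maximal ideal `m` (completeness
and separatedness being expressed by `IsAdicComplete m A`).  An `A`-module `V` is called
*orthonormalizable* if `V` is `m`-adically complete and separated (`IsAdicComplete m V`) and
the quotient `V / m^i V` is a free `A / m^i`-module for every `i ≥ 1`.  The statement: every
orthonormalizable `A`-module is flat over `A`. -/
theorem flat_of_orthonormalizable
    (A : Type*) [CommRing A] [IsNoetherianRing A] [IsLocalRing A]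
    [IsAdicComplete (IsLocalRing.maximalIdeal A) A]
    (V : Type*) [AddCommGroup V] [Module A V]
    (hVcomplete : IsAdicComplete (IsLocalRing.maximalIdeal A) V)
    (hVfree : ∀ i : ℕ, 1 ≤ i →
      Module.Free (A ⧸ (IsLocalRing.maximalIdeal A ^ i))
        (V ⧸ ((IsLocalRing.maximalIdeal A ^ i) • (⊤ : Submodule A V)))) :
    Module.Flat A V := by
  exact flat_of_orthonormalizable_general (IsLocalRing.maximalIdeal A) V fun i hi ↦
    have := hVfree i hi
    inferInstance
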